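/- arXiv:2103.05574 — 3 statements merged into one kernel-verified Lean document; each statement's English description precedes it below -/
import Mathlib

section
/- Let p ≥ 2, let μ₁ ∈ ℝ^p and β ∈ ℝ, and let X ∼ N(μ₁, I_p) and Y ∼ N(βμ₁, I_p) be independent p-dimensional Gaussian vectors. Define R(β̂) = inf_{b ∈ ℝ} (Y − bX)ᵀ(Y − bX)/(1 + b²). Then R(β̂) is stochastically dominated by the chi-squared distribution with p − 1 degrees of freedom: for every t ≥ 0, P(R(β̂) > t) ≤ P(Z > t) where Z ∼ χ²_{p−1}. -/
open MeasureTheory ProbabilityTheory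

/-- The multivariate normal distribution `N(μ, I_p)` on `ℝ^p`, realized as the product of
independent one-dimensional Gaussians `N(μ i, 1)`. -/
noncomputable def mvGaussianId (p : ℕ) (μ : Fin p → ℝ) : Measure (Fin p → ℝ) :=
  Measure.pi fun i => gaussianReal (μ i) 1

/-- The chi-squared distribution with `k` degrees of freedom, i.e. the Gamma distribution
with shape `k/2` and rate `1/2`. -/
noncomputable def chiSquared (k : ℝ) : Measure ℝ :=
  gammaMeasure (k / 2) (1 / 2)

/-!
Minimizing over slopes `b` is minimizing `‖d • Y - c • X‖²` over unit vectors `(c, d)` of the plane.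
Rotate the pair `(X, Y)` by the angle of the vector `(1, β)` to a pair `(U, V)`: all of the mean
moves into `U`, so `V` is a standard Gaussian vector independent of `U`. For every `α`, the vector
`V - α • U` has the form `d • Y - c • X` with `c² + d² = 1 + α² ≥ 1`, hence `R(β̂)` is at most the
squared norm of the projection of `V` onto the orthogonal complement of `U`. As `U ≠ 0` almost
surely, that squared norm is `χ²_{p-1}` conditionally on `U`, and hence unconditionally. The law of
the squared norm of a standard Gaussian vector is identified through its moment generating
function near `0`.
-/

open Module Filter
open scoped Topology NNReal

section ProfileResidual

variable {E : Type*} [NormedAddCommGroup E] [InnerProductSpace ℝ E]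

/-- The profile log-likelihood ratio `R(β̂)` of the observations `x` and `y`: the least squares
criterion of the errors-in-variables model `y ≈ b x`, minimized over the slope `b`. -/
noncomputable def profileResidual (x y : E) : ℝ :=
  ⨅ b : ℝ, ‖y - b • x‖ ^ 2 / (1 + b ^ 2)

lemma profileResidual_nonneg (x y : E) : 0 ≤ profileResidual x y :=
  Real.iInf_nonneg fun _ ↦ by positivity

lemma profileResidual_mul_le_norm_sq (x y : E) (c d : ℝ) :
    profileResidual x y * (c ^ 2 + d ^ 2) ≤ ‖d • y - c • x‖ ^ 2 := by
  -- Only `d ≠ 0` corresponds to a slope, `b = c / d`; the direction `d = 0` is a limit of these.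
  refine (dense_compl_singleton (0 : ℝ)).induction (fun d hd ↦ ?_)
    (isClosed_le (by fun_prop) (by fun_prop)) d
  rw [Set.mem_compl_singleton_iff] at hd
  have le_at_slope : profileResidual x y ≤ ‖y - (c / d) • x‖ ^ 2 / (1 + (c / d) ^ 2) :=
    ciInf_le ⟨0, Set.forall_mem_range.2 fun _ ↦ by positivity⟩ (c / d)
  calc profileResidual x y * (c ^ 2 + d ^ 2)
    _ = d ^ 2 * (profileResidual x y * (1 + (c / d) ^ 2)) := by field_simp; ring
    _ ≤ d ^ 2 * ‖y - (c / d) • x‖ ^ 2 := by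
      gcongr
      exact (le_div_iff₀ (by positivity)).1 le_at_slope
    _ = ‖d • y - c • x‖ ^ 2 := by
      rw [← sq_abs, ← Real.norm_eq_abs, ← mul_pow, ← norm_smul, smul_sub, smul_smul,
        mul_div_cancel₀ _ hd]

lemma starProjection_orthogonal_span_singleton (u v : E) :
    (ℝ ∙ u)ᗮ.starProjection v = v - (inner ℝ u v / ‖u‖ ^ 2) • u := by
  rw [Submodule.starProjection_orthogonal_val, Submodule.starProjection_singleton,
    RCLike.ofReal_real_eq_id, id_eq]

lemma profileResidual_le_norm_sq_starProjection_rotation (x y : E) (θ : ℝ) :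
    profileResidual x y ≤ ‖(ℝ ∙ (ContinuousLinearMap.rotation θ (x, y)).1)ᗮ.starProjection
      (ContinuousLinearMap.rotation θ (x, y)).2‖ ^ 2 := by
  rw [starProjection_orthogonal_span_singleton, ContinuousLinearMap.rotation_apply]
  generalize inner ℝ (_ : E) _ / _ = α
  have sq_add_sq : (Real.sin θ + α * Real.cos θ) ^ 2 + (Real.cos θ - α * Real.sin θ) ^ 2 =
      1 + α ^ 2 := by
    linear_combination (1 + α ^ 2) * Real.sin_sq_add_cos_sq θ
  calc profileResidual x y
    _ ≤ profileResidual x y * (1 + α ^ 2) :=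
      le_mul_of_one_le_right (profileResidual_nonneg x y) (by nlinarith)
    _ ≤ ‖(Real.cos θ - α * Real.sin θ) • y - (Real.sin θ + α * Real.cos θ) • x‖ ^ 2 :=
      sq_add_sq ▸ profileResidual_mul_le_norm_sq x y _ _
    _ = _ := by
      congr 2
      module

end ProfileResidual

section MomentGeneratingFunctions

lemma measure_eq_of_mgf_eventuallyEq {μ ν : Measure ℝ} [IsFiniteMeasure μ] [IsFiniteMeasure ν]
    (hμ : 0 ∈ interior (integrableExpSet id μ)) (hν : 0 ∈ interior (integrableExpSet id ν))
    (hmgf : mgf id μ =ᶠ[𝓝 0] mgf id ν) : μ = ν := by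
  let strip : Set ℂ :=
    Complex.re ⁻¹' (interior (integrableExpSet id μ) ∩ interior (integrableExpSet id ν))
  have mem_strip {z : ℂ} (hz : z.re = 0) : z ∈ strip := by
    simpa only [strip, Set.mem_preimage, hz] using ⟨hμ, hν⟩
  have strip_preconnected : IsPreconnected strip :=
    ((convex_integrableExpSet.interior.inter
      convex_integrableExpSet.interior).linear_preimage Complex.reLm).isPreconnected
  have eventually_eq_real : ∀ᶠ x : ℝ in 𝓝[≠] 0, complexMGF id μ x = complexMGF id ν x := by
    filter_upwards [hmgf.filter_mono nhdsWithin_le_nhds] with x hx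
    rw [complexMGF_ofReal, complexMGF_ofReal, hx]
  have tendsto_ofReal : Tendsto ((↑) : ℝ → ℂ) (𝓝[≠] 0) (𝓝[≠] 0) :=
    Complex.continuous_ofReal.continuousAt.tendsto.inf
      (tendsto_principal_principal.2 fun x hx ↦ by simpa using hx)
  have eqOn_strip : Set.EqOn (complexMGF id μ) (complexMGF id ν) strip :=
    (analyticOnNhd_complexMGF.mono fun _ hz ↦ hz.1).eqOn_of_preconnected_of_frequently_eq
      (analyticOnNhd_complexMGF.mono fun _ hz ↦ hz.2) strip_preconnected
      (mem_strip Complex.zero_re) (tendsto_ofReal.frequently eventually_eq_real.frequently)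
  refine Measure.ext_of_charFun (funext fun t ↦ ?_)
  rw [← complexMGF_id_mul_I, ← complexMGF_id_mul_I, eqOn_strip (mem_strip (by simp))]

lemma subset_interior_integrableExpSet_of_mgf_pos {Ω : Type*} [MeasurableSpace Ω] {X : Ω → ℝ}
    {μ : Measure Ω} {s : Set ℝ} (hs : IsOpen s) (hpos : ∀ t ∈ s, 0 < mgf X μ t) :
    s ⊆ interior (integrableExpSet X μ) :=
  interior_maximal (fun t ht ↦ not_imp_comm.1 mgf_undef (hpos t ht).ne') hs

lemma mgf_id_gammaMeasure {a r t : ℝ} (ha : 0 < a) (hr : 0 < r) (ht : t < r) :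
    mgf id (gammaMeasure a r) t = (r / (r - t)) ^ a := by
  have integrand_eq : ∀ x ∈ Set.Ioi (0 : ℝ), (gammaPDF a r x).toReal • Real.exp (t * id x) =
      r ^ a / Real.Gamma a * (x ^ (a - 1) * Real.exp (-((r - t) * x))) := fun x hx ↦ by
    rw [gammaPDF_of_nonneg (Set.mem_Ioi.1 hx).le, ENNReal.toReal_ofReal, smul_eq_mul, mul_assoc,
      mul_assoc, ← Real.exp_add, id_eq]
    · ring_nf
    · have := Set.mem_Ioi.1 hx
      have := Real.Gamma_pos_of_pos ha
      positivity
  calc mgf id (gammaMeasure a r) t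
    _ = ∫ x, (gammaPDF a r x).toReal • Real.exp (t * id x) :=
      integral_withDensity_eq_integral_toReal_smul (measurable_gammaPDFReal a r).ennreal_ofReal
        (ae_of_all _ fun _ ↦ ENNReal.ofReal_lt_top) _
    _ = ∫ x in Set.Ioi 0, (gammaPDF a r x).toReal • Real.exp (t * id x) := by
      rw [← integral_Ici_eq_integral_Ioi, setIntegral_eq_integral_of_forall_compl_eq_zero]
      intro x hx
      simp [gammaPDF_of_neg (not_le.1 hx)]
    _ = r ^ a / Real.Gamma a * ((1 / (r - t)) ^ a * Real.Gamma a) := by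
      rw [setIntegral_congr_fun measurableSet_Ioi integrand_eq, integral_const_mul,
        Real.integral_rpow_mul_exp_neg_mul_Ioi ha (sub_pos.2 ht)]
    _ = (r / (r - t)) ^ a := by
      rw [div_eq_mul_one_div r, Real.mul_rpow hr.le (one_div_pos.2 (sub_pos.2 ht)).le]
      field_simp [(Real.Gamma_pos_of_pos ha).ne']

lemma mgf_id_chiSquared {k t : ℝ} (hk : 0 < k) (ht : 2 * t < 1) :
    mgf id (chiSquared k) t = (√(1 - 2 * t))⁻¹ ^ k := by
  have := sub_pos.2 ht
  rw [chiSquared, mgf_id_gammaMeasure (half_pos hk) one_half_pos (by linarith),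
    Real.inv_rpow (Real.sqrt_nonneg _), Real.sqrt_eq_rpow, ← Real.rpow_mul (by linarith),
    ← Real.inv_rpow (by linarith)]
  congr 1 <;> field_simp

lemma mgf_sq_gaussianReal {v : ℝ≥0} {t : ℝ} (ht : 2 * v * t < 1) :
    mgf (fun x ↦ x ^ 2) (gaussianReal 0 v) t = (√(1 - 2 * v * t))⁻¹ := by
  rcases eq_or_ne v 0 with rfl | hv
  · simp [mgf]
  have hv' : (v : ℝ) ≠ 0 := NNReal.coe_ne_zero.2 hv
  have integrand_eq (x : ℝ) : gaussianPDFReal 0 v x • Real.exp (t * x ^ 2) =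
      (√(2 * Real.pi * v))⁻¹ * Real.exp (-((1 - 2 * v * t) / (2 * v)) * x ^ 2) := by
    rw [gaussianPDFReal, smul_eq_mul, mul_assoc, ← Real.exp_add]
    congr 2
    field_simp
    ring
  rw [mgf, integral_gaussianReal_eq_integral_smul hv]
  simp_rw [integrand_eq]
  rw [integral_const_mul, integral_gaussian, ← Real.sqrt_inv, ← Real.sqrt_inv,
    ← Real.sqrt_mul (by positivity)]
  have := sub_pos.2 ht
  congr 1
  field_simp

end MomentGeneratingFunctions

section StandardGaussian

variable {E : Type*} [NormedAddCommGroup E] [InnerProductSpace ℝ E] [FiniteDimensional ℝ E]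
  [MeasurableSpace E] [BorelSpace E]

lemma mgf_norm_sq_stdGaussian {t : ℝ} (ht : 2 * t < 1) :
    mgf (fun x ↦ ‖x‖ ^ 2) (stdGaussian E) t = (√(1 - 2 * t))⁻¹ ^ finrank ℝ E := by
  let e := stdOrthonormalBasis ℝ E
  have exp_norm_sq (x : Fin (finrank ℝ E) → ℝ) :
      Real.exp (t * ‖∑ i, x i • e i‖ ^ 2) = ∏ i, Real.exp (t * x i ^ 2) := by
    simp_rw [← e.sum_sq_inner_right, e.orthonormal.inner_right_fintype x, Finset.mul_sum,
      Real.exp_sum]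
  calc mgf (fun x ↦ ‖x‖ ^ 2) (stdGaussian E) t
    _ = ∫ x : Fin (finrank ℝ E) → ℝ, ∏ i, Real.exp (t * x i ^ 2)
          ∂Measure.pi fun _ ↦ gaussianReal 0 1 := by
      rw [mgf, stdGaussian, integral_map (Measurable.aemeasurable (by fun_prop)) (by fun_prop)]
      exact integral_congr_ae (ae_of_all _ exp_norm_sq)
    _ = mgf (fun x ↦ x ^ 2) (gaussianReal 0 1) t ^ finrank ℝ E := by
      rw [integral_fintype_prod_eq_pow fun y ↦ Real.exp (t * y ^ 2), Fintype.card_fin, mgf]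
    _ = (√(1 - 2 * t))⁻¹ ^ finrank ℝ E := by
      rw [mgf_sq_gaussianReal] <;> simp [ht]

lemma map_norm_sq_stdGaussian [Nontrivial E] :
    (stdGaussian E).map (fun x ↦ ‖x‖ ^ 2) = chiSquared (finrank ℝ E) := by
  have finrank_pos : (0 : ℝ) < finrank ℝ E := Nat.cast_pos.2 Module.finrank_pos
  have : IsProbabilityMeasure (chiSquared (finrank ℝ E)) :=
    isProbabilityMeasure_gammaMeasure (half_pos finrank_pos) one_half_pos
  let s : Set ℝ := {t | 2 * t < 1}
  have isOpen_s : IsOpen s := isOpen_lt (by fun_prop) (by fun_prop)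
  have zero_mem_s : 0 ∈ s := by simp [s]
  have sqrt_pos {t : ℝ} (ht : t ∈ s) : 0 < (√(1 - 2 * t))⁻¹ :=
    inv_pos.2 (Real.sqrt_pos.2 (sub_pos.2 ht))
  have mgf_norm_sq {t : ℝ} (ht : t ∈ s) :
      mgf id ((stdGaussian E).map fun x ↦ ‖x‖ ^ 2) t = (√(1 - 2 * t))⁻¹ ^ finrank ℝ E := by
    rw [mgf_id_map (by fun_prop), mgf_norm_sq_stdGaussian ht]
  refine measure_eq_of_mgf_eventuallyEq
    (subset_interior_integrableExpSet_of_mgf_pos isOpen_s (fun t ht ↦ ?_) zero_mem_s)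
    (subset_interior_integrableExpSet_of_mgf_pos isOpen_s (fun t ht ↦ ?_) zero_mem_s)
    (eventually_of_mem (isOpen_s.mem_nhds zero_mem_s) fun t ht ↦ ?_)
  · exact mgf_norm_sq ht ▸ pow_pos (sqrt_pos ht) _
  · exact mgf_id_chiSquared finrank_pos ht ▸ Real.rpow_pos_of_pos (sqrt_pos ht) _
  · rw [mgf_norm_sq ht, mgf_id_chiSquared finrank_pos ht, Real.rpow_natCast]

lemma map_orthogonalProjectionOnto_stdGaussian (K : Submodule ℝ E) :
    (stdGaussian E).map K.orthogonalProjectionOnto = stdGaussian K := by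
  refine Measure.ext_of_charFun (funext fun t ↦ ?_)
  rw [charFun_apply, integral_map (by fun_prop) (by fun_prop)]
  simp_rw [Submodule.inner_orthogonalProjectionOnto_eq_of_mem_right]
  rw [← charFun_apply, charFun_stdGaussian, charFun_stdGaussian, Submodule.coe_norm]

lemma map_norm_sq_starProjection_stdGaussian (K : Submodule ℝ E) [Nontrivial K] :
    (stdGaussian E).map (fun x ↦ ‖K.starProjection x‖ ^ 2) = chiSquared (finrank ℝ K) := by
  rw [← map_norm_sq_stdGaussian, ← map_orthogonalProjectionOnto_stdGaussian,
    Measure.map_map (by fun_prop) (by fun_prop)]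
  rfl

lemma nullSingletonClass_stdGaussian [Nontrivial E] : NullSingletonClass (stdGaussian E) := by
  refine IsGaussian.nullSingletonClass fun x hx ↦ ?_
  obtain ⟨v, hv⟩ := exists_ne (0 : E)
  have variance_eq := variance_dual_stdGaussian (innerSL ℝ v)
  rw [hx, variance_dirac, innerSL_apply_norm] at variance_eq
  exact hv (by simpa using variance_eq.symm)

end StandardGaussian

section Residual

variable {Ω α β γ : Type*} {mΩ : MeasurableSpace Ω} {mα : MeasurableSpace α}
  {mβ : MeasurableSpace β} {mγ : MeasurableSpace γ} {P : Measure Ω}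

lemma hasLaw_comp_of_indepFun_of_ae_map_eq [IsProbabilityMeasure P] {U : Ω → α} {V : Ω → β}
    {ν : Measure β} {ρ : Measure γ} {f : α → β → γ} (hU : AEMeasurable U P) (hV : HasLaw V ν P)
    (hUV : IndepFun U V P) (hf : Measurable (Function.uncurry f))
    (hmap : ∀ᵐ ω ∂P, ν.map (f (U ω)) = ρ) : HasLaw (fun ω ↦ f (U ω) (V ω)) ρ P := by
  have hUV_law : HasLaw (fun ω ↦ (U ω, V ω)) ((P.map U).prod ν) P :=
    hUV.hasLaw_prod ⟨hU, rfl⟩ hV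
  have := hV.isProbabilityMeasure_iff.1 ‹_›
  refine HasLaw.fun_comp ⟨hf.aemeasurable, Measure.ext fun s hs ↦ ?_⟩ hUV_law
  have slice_eq : ∀ᵐ ω ∂P, ν (Prod.mk (U ω) ⁻¹' (Function.uncurry f ⁻¹' s)) = ρ s := by
    filter_upwards [hmap] with ω hω
    rw [← hω, Measure.map_apply hf.of_uncurry_left hs]
    rfl
  rw [Measure.map_apply hf hs, Measure.prod_apply (hf hs),
    lintegral_map' (measurable_measure_prodMk_left (hf hs)).aemeasurable hU,
    lintegral_congr_ae slice_eq, lintegral_const, measure_univ, mul_one]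

variable {E : Type*} [NormedAddCommGroup E] [InnerProductSpace ℝ E] [FiniteDimensional ℝ E]
  [MeasurableSpace E] [BorelSpace E]

lemma hasLaw_norm_sq_starProjection_orthogonal_span_singleton (hE : 2 ≤ finrank ℝ E)
    {U V : Ω → E} (hU : AEMeasurable U P) (hU_ne : ∀ᵐ ω ∂P, U ω ≠ 0)
    (hV : HasLaw V (stdGaussian E) P) (hUV : IndepFun U V P) :
    HasLaw (fun ω ↦ ‖(ℝ ∙ U ω)ᗮ.starProjection (V ω)‖ ^ 2) (chiSquared (finrank ℝ E - 1)) P := by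
  have := hV.isProbabilityMeasure
  refine hasLaw_comp_of_indepFun_of_ae_map_eq (f := fun u v ↦ ‖(ℝ ∙ u)ᗮ.starProjection v‖ ^ 2)
    hU hV hUV ?_ ?_
  · simp_rw [starProjection_orthogonal_span_singleton]
    unfold Function.uncurry
    fun_prop
  · filter_upwards [hU_ne] with ω hω
    have finrank_add := Submodule.finrank_add_finrank_orthogonal (ℝ ∙ U ω)
    rw [finrank_span_singleton hω] at finrank_add
    have : Nontrivial (ℝ ∙ U ω)ᗮ := nontrivial_of_finrank_pos (R := ℝ) (by lia)
    rw [map_norm_sq_starProjection_stdGaussian, ← finrank_add, Nat.cast_add, Nat.cast_one,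
      add_sub_cancel_left]

end Residual

lemma exists_rotation_smul_eq {E : Type*} [NormedAddCommGroup E] [NormedSpace ℝ E] (a b : ℝ)
    (m : E) : ∃ (θ : ℝ) (w : E), ContinuousLinearMap.rotation θ (a • m, b • m) = (w, 0) := by
  let z : ℂ := ⟨a, b⟩
  refine ⟨z.arg, _, Prod.ext rfl ?_⟩
  have ha : a = ‖z‖ * Real.cos z.arg := z.norm_mul_cos_arg.symm
  have hb : b = ‖z‖ * Real.sin z.arg := z.norm_mul_sin_arg.symm
  change -Real.sin z.arg • a • m + Real.cos z.arg • b • m = 0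
  match_scalars
  linear_combination Real.cos z.arg * hb - Real.sin z.arg * ha

section Rotation

variable {Ω E : Type*} {mΩ : MeasurableSpace Ω} {P : Measure Ω} [NormedAddCommGroup E]
  [InnerProductSpace ℝ E] [FiniteDimensional ℝ E] [MeasurableSpace E] [BorelSpace E]

lemma hasLaw_rotation_stdGaussian {X Y : Ω → E} (hX : HasLaw X (stdGaussian E) P)
    (hY : HasLaw Y (stdGaussian E) P) (hXY : IndepFun X Y P) (θ : ℝ) :
    HasLaw (fun ω ↦ ContinuousLinearMap.rotation θ (X ω, Y ω))
      ((stdGaussian E).prod (stdGaussian E)) P := by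
  have := hX.isProbabilityMeasure
  exact HasLaw.fun_comp ⟨by fun_prop, IsGaussian.map_rotation_eq_self (by simp) θ⟩
    (hXY.hasLaw_prod hX hY)

lemma exists_rotation_indepFun_stdGaussian [Nontrivial E] {X Y : Ω → E} {m : E} {a b : ℝ}
    (hX : HasLaw (fun ω ↦ X ω - a • m) (stdGaussian E) P)
    (hY : HasLaw (fun ω ↦ Y ω - b • m) (stdGaussian E) P) (hXY : IndepFun X Y P) :
    ∃ θ : ℝ, ∃ U V : Ω → E,
      (∀ ω, ContinuousLinearMap.rotation θ (X ω, Y ω) = (U ω, V ω)) ∧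
      AEMeasurable U P ∧ (∀ᵐ ω ∂P, U ω ≠ 0) ∧ HasLaw V (stdGaussian E) P ∧ IndepFun U V P := by
  have := hX.isProbabilityMeasure
  obtain ⟨θ, w, hθ⟩ := exists_rotation_smul_eq a b m
  obtain ⟨U, V, hUV⟩ : ∃ U V : Ω → E, ∀ ω,
    ContinuousLinearMap.rotation θ (X ω, Y ω) = (U ω, V ω) := ⟨_, _, fun _ ↦ rfl⟩
  have joint_law :
      HasLaw (fun ω ↦ (U ω - w, V ω)) ((stdGaussian E).prod (stdGaussian E)) P := by
    convert hasLaw_rotation_stdGaussian hX hY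
      (hXY.comp (measurable_sub_const (a • m)) (measurable_sub_const (b • m))) θ using 2 with ω
    rw [← Prod.mk_sub_mk, map_sub, hθ, hUV, Prod.mk_sub_mk, sub_zero]
  have hU : HasLaw (fun ω ↦ U ω - w) (stdGaussian E) P :=
    measurePreserving_fst.hasLaw.fun_comp joint_law
  have hV : HasLaw V (stdGaussian E) P := measurePreserving_snd.hasLaw.fun_comp joint_law
  have centered_indep : IndepFun (fun ω ↦ U ω - w) V P :=
    (indepFun_iff_hasLaw_prodMk_prod hU hV).2 joint_law
  refine ⟨θ, U, V, hUV, ?_, ?_, hV, ?_⟩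
  · simpa using hU.aemeasurable.add_const w
  · have := nullSingletonClass_stdGaussian (E := E)
    have ne_neg : ∀ᵐ ω ∂P, U ω - w ≠ -w :=
      (hU.ae_iff (by fun_prop)).2 (Measure.ae_ne _ _)
    filter_upwards [ne_neg] with ω hω hUω
    exact hω (by rw [hUω, zero_sub])
  · simpa [Function.comp_def] using centered_indep.comp (measurable_add_const w) measurable_id

theorem profile_llr_stochastically_dominated_by_chiSq_sub_one_general (hE : 2 ≤ finrank ℝ E)
    {X Y : Ω → E} {m : E} {a b : ℝ} (hX : HasLaw (fun ω ↦ X ω - a • m) (stdGaussian E) P)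
    (hY : HasLaw (fun ω ↦ Y ω - b • m) (stdGaussian E) P) (hXY : IndepFun X Y P) (t : ℝ) :
    P {ω | t < profileResidual (X ω) (Y ω)} ≤ chiSquared (finrank ℝ E - 1) {z | t < z} := by
  have : Nontrivial E := nontrivial_of_finrank_pos (R := ℝ) (by lia)
  obtain ⟨θ, U, V, hUV, hU, hU_ne, hV, indep⟩ := exists_rotation_indepFun_stdGaussian hX hY hXY
  have residual_law :=
    hasLaw_norm_sq_starProjection_orthogonal_span_singleton hE hU hU_ne hV indep
  calc P {ω | t < profileResidual (X ω) (Y ω)}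
    _ ≤ P {ω | t < ‖(ℝ ∙ U ω)ᗮ.starProjection (V ω)‖ ^ 2} := measure_mono fun ω hω ↦ by
      have := profileResidual_le_norm_sq_starProjection_rotation (X ω) (Y ω) θ
      rw [hUV] at this
      exact hω.trans_le this
    _ = chiSquared (finrank ℝ E - 1) {z | t < z} := residual_law.measure_eq measurableSet_Ioi

end Rotation

section Coordinates

variable {Ω : Type*} {mΩ : MeasurableSpace Ω} {P : Measure Ω} {p : ℕ}

lemma hasLaw_toLp_sub_stdGaussian {X : Ω → Fin p → ℝ} {μ : Fin p → ℝ}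
    (hX : HasLaw X (mvGaussianId p μ) P) :
    HasLaw (fun ω ↦ WithLp.toLp 2 (X ω) - WithLp.toLp 2 μ)
      (stdGaussian (EuclideanSpace ℝ (Fin p))) P := by
  have center_law :
      HasLaw (fun x i ↦ x i - μ i) (Measure.pi fun _ ↦ gaussianReal 0 1) (mvGaussianId p μ) := by
    refine ⟨Measurable.aemeasurable (by fun_prop), ?_⟩
    rw [mvGaussianId, Measure.pi_map_pi (f := fun i x ↦ x - μ i) (by fun_prop)]
    simp_rw [gaussianReal_map_sub_const, sub_self]
  exact HasLaw.fun_comp ⟨by fun_prop, map_pi_eq_stdGaussian⟩ (center_law.comp hX)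

lemma profileResidual_toLp (x y : Fin p → ℝ) :
    profileResidual (WithLp.toLp 2 x) (WithLp.toLp 2 y) =
      ⨅ b : ℝ, (∑ i, (y i - b * x i) ^ 2) / (1 + b ^ 2) := by
  simp [profileResidual, EuclideanSpace.real_norm_sq_eq]

end Coordinates

/-- If `X ∼ N(μ₁, I_p)` and `Y ∼ N(βμ₁, I_p)` are independent with `p ≥ 2`, then
`R(β̂) = inf_b (Y - bX)ᵀ(Y - bX)/(1 + b²)` is stochastically dominated by `χ²_{p-1}`. -/
theorem profile_llr_stochastically_dominated_by_chiSq_sub_one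
    {Ω : Type*} [MeasureSpace Ω] [IsProbabilityMeasure (ℙ : Measure Ω)]
    (p : ℕ) (hp : 2 ≤ p) (μ₁ : Fin p → ℝ) (β : ℝ)
    (X Y : Ω → Fin p → ℝ) (hX : Measurable X) (hY : Measurable Y)
    (hXlaw : Measure.map X ℙ = mvGaussianId p μ₁)
    (hYlaw : Measure.map Y ℙ = mvGaussianId p (fun i => β * μ₁ i))
    (hindep : IndepFun X Y ℙ)
    (R : Ω → ℝ)
    (hR : ∀ ω, R ω = ⨅ b : ℝ, (∑ i, (Y ω i - b * X ω i) ^ 2) / (1 + b ^ 2)) :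
    ∀ t : ℝ, 0 ≤ t → ℙ {ω | R ω > t} ≤ chiSquared ((p : ℝ) - 1) {z | z > t} := by
  intro t _
  have hX_centered : HasLaw (fun ω ↦ WithLp.toLp 2 (X ω) - (1 : ℝ) • WithLp.toLp 2 μ₁)
      (stdGaussian (EuclideanSpace ℝ (Fin p))) ℙ := by
    simpa only [one_smul] using hasLaw_toLp_sub_stdGaussian ⟨hX.aemeasurable, hXlaw⟩
  have hY_centered : HasLaw (fun ω ↦ WithLp.toLp 2 (Y ω) - β • WithLp.toLp 2 μ₁)
      (stdGaussian (EuclideanSpace ℝ (Fin p))) ℙ :=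
    hasLaw_toLp_sub_stdGaussian ⟨hY.aemeasurable, hYlaw⟩
  have toLp_indep : IndepFun (fun ω ↦ WithLp.toLp 2 (X ω)) (fun ω ↦ WithLp.toLp 2 (Y ω)) ℙ :=
    hindep.comp (WithLp.measurable_toLp 2 _) (WithLp.measurable_toLp 2 _)
  simpa only [profileResidual_toLp, ← hR, finrank_euclideanSpace_fin] using
    profile_llr_stochastically_dominated_by_chiSq_sub_one_general
      (by rwa [finrank_euclideanSpace_fin]) hX_centered hY_centered toLp_indep t
end

section
/- For every integer j ≥ 1 and every real x > 1, the Legendre polynomials satisfy j·P_{j−1}(x) ≤ (j+1)·(x − √(x² − 1))·P_j(x). Equivalently, since P_j(x) > 0 for x > 1, P_{j−1}(x)/P_j(x) ≤ ((j+1)/j)·(x − √(x² − 1)). -/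
/-- The Legendre polynomials, as real functions: `P₀(x) = 1`, `P₁(x) = x`, and Bonnet's
recursion `(j+1) P_{j+1}(x) = (2j+1) x P_j(x) - j P_{j-1}(x)` for `j ≥ 1`. -/
noncomputable def legendreP : ℕ → ℝ → ℝ
  | 0, _ => 1
  | 1, x => x
  | n + 2, x =>
      ((2 * (n : ℝ) + 3) * x * legendreP (n + 1) x - ((n : ℝ) + 1) * legendreP n x) /
        ((n : ℝ) + 2)

/-!
Put `t = x - √(x² - 1)`, the smaller root of `t² - 2xt + 1 = 0`. The inequality
`j P_{j-1} ≤ (j+1) t P_j` is proved by induction on `j`: Bonnet's recursion reduces the step to an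
upper bound on `j P_{j-1}` in terms of `P_j`. When `(j+2) t² ≤ j` the induction hypothesis is a
good enough bound; otherwise the monotonicity `P_{j-1} ≤ P_j` is.
-/

-- At `k = 0` the truncated index `k - 1` is harmless, since its term has coefficient `0`.
lemma succ_mul_legendreP_succ (k : ℕ) (x : ℝ) :
    ((k : ℝ) + 1) * legendreP (k + 1) x =
      (2 * (k : ℝ) + 1) * x * legendreP k x - (k : ℝ) * legendreP (k - 1) x := by
  cases k with
  | zero => simp [legendreP]
  | succ n =>
    rw [legendreP, Nat.add_sub_cancel]
    push_cast
    field_simp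
    ring

lemma legendreP_pos_and_le_succ {x : ℝ} (hx : 1 ≤ x) (k : ℕ) :
    0 < legendreP k x ∧ legendreP k x ≤ legendreP (k + 1) x := by
  induction k with
  | zero => simpa [legendreP] using hx
  | succ k ih =>
    obtain ⟨hpos, hle⟩ := ih
    have hpos_succ : 0 < legendreP (k + 1) x := hpos.trans_le hle
    refine ⟨hpos_succ, le_of_mul_le_mul_left ?_ (by positivity : (0 : ℝ) < (k + 1 : ℕ) + 1)⟩
    calc (((k + 1 : ℕ) : ℝ) + 1) * legendreP (k + 1) x
        = (2 * ((k + 1 : ℕ) : ℝ) + 1) * 1 * legendreP (k + 1) x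
            - ((k + 1 : ℕ) : ℝ) * legendreP (k + 1) x := by ring
      _ ≤ (2 * ((k + 1 : ℕ) : ℝ) + 1) * x * legendreP (k + 1) x
            - ((k + 1 : ℕ) : ℝ) * legendreP k x := by gcongr
      _ = (((k + 1 : ℕ) : ℝ) + 1) * legendreP (k + 1 + 1) x :=
          (succ_mul_legendreP_succ (k + 1) x).symm

lemma legendreP_pos {x : ℝ} (hx : 1 ≤ x) (k : ℕ) : 0 < legendreP k x :=
  (legendreP_pos_and_le_succ hx k).1

lemma monotone_legendreP {x : ℝ} (hx : 1 ≤ x) : Monotone fun k ↦ legendreP k x :=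
  monotone_nat_of_le_succ fun k ↦ (legendreP_pos_and_le_succ hx k).2

lemma two_mul_succ_sq_mul_le {k t a b : ℝ} (hk : 0 ≤ k) (ht : 0 ≤ t) (hb : 0 ≤ b) (hab : a ≤ b)
    (hkab : k * a ≤ (k + 1) * t * b) :
    2 * (k + 1) ^ 2 * b ≤ (k + 2) * ((2 * k + 1) * (t ^ 2 + 1) * b - 2 * t * (k * a)) := by
  rcases le_total ((k + 2) * t ^ 2) k with hsmall | hlarge
  · have hgap : 0 ≤ (k - (k + 2) * t ^ 2) * b := mul_nonneg (sub_nonneg.2 hsmall) hb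
    calc 2 * (k + 1) ^ 2 * b
        ≤ 2 * (k + 1) ^ 2 * b + (k - (k + 2) * t ^ 2) * b := le_add_of_nonneg_right hgap
      _ = (k + 2) * ((2 * k + 1) * (t ^ 2 + 1) * b - 2 * t * ((k + 1) * t * b)) := by ring
      _ ≤ (k + 2) * ((2 * k + 1) * (t ^ 2 + 1) * b - 2 * t * (k * a)) := by gcongr
  · have hgap : 0 ≤ ((k + 1) * ((k + 2) * t ^ 2 - k) + k * (k + 2) * (1 - t) ^ 2) * b := by
      have := sub_nonneg.2 hlarge
      positivity
    calc 2 * (k + 1) ^ 2 * b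
        ≤ 2 * (k + 1) ^ 2 * b
            + ((k + 1) * ((k + 2) * t ^ 2 - k) + k * (k + 2) * (1 - t) ^ 2) * b :=
          le_add_of_nonneg_right hgap
      _ = (k + 2) * ((2 * k + 1) * (t ^ 2 + 1) * b - 2 * t * (k * b)) := by ring
      _ ≤ (k + 2) * ((2 * k + 1) * (t ^ 2 + 1) * b - 2 * t * (k * a)) := by gcongr

lemma mul_legendreP_pred_le {x t : ℝ} (hx : 1 ≤ x) (hxt : 2 * x * t = t ^ 2 + 1) (k : ℕ) :
    (k : ℝ) * legendreP (k - 1) x ≤ ((k : ℝ) + 1) * t * legendreP k x := by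
  have ht : 0 ≤ t := by
    have hprod : 0 ≤ 2 * x * t := hxt ▸ by positivity
    exact nonneg_of_mul_nonneg_right hprod (by positivity)
  induction k with
  | zero => simpa [legendreP] using ht
  | succ k ih =>
    rw [Nat.add_sub_cancel]
    push_cast
    refine le_of_mul_le_mul_left ?_ (by positivity : (0 : ℝ) < 2 * (k + 1))
    calc 2 * ((k : ℝ) + 1) * ((k + 1) * legendreP k x)
        = 2 * ((k : ℝ) + 1) ^ 2 * legendreP k x := by ring
      _ ≤ (k + 2) * ((2 * k + 1) * (t ^ 2 + 1) * legendreP k x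
            - 2 * t * (k * legendreP (k - 1) x)) :=
          two_mul_succ_sq_mul_le k.cast_nonneg ht (legendreP_pos hx k).le
            (monotone_legendreP hx (k.sub_le 1)) ih
      _ = (k + 2) * (2 * t) * ((2 * k + 1) * x * legendreP k x - k * legendreP (k - 1) x) := by
          rw [← hxt]; ring
      _ = 2 * (k + 1) * ((k + 1 + 1) * t * legendreP (k + 1) x) := by
          rw [← succ_mul_legendreP_succ]; ring

lemma two_mul_mul_sub_sqrt_sq_sub_one {x : ℝ} (hx : 1 ≤ x ^ 2) :
    2 * x * (x - √(x ^ 2 - 1)) = (x - √(x ^ 2 - 1)) ^ 2 + 1 := by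
  linear_combination -Real.sq_sqrt (sub_nonneg.2 hx)

/-- For `j ≥ 1` and `x > 1`, `j P_{j-1}(x) ≤ (j+1)(x - √(x²-1)) P_j(x)`; equivalently, since
`P_j(x) > 0`, `P_{j-1}(x)/P_j(x) ≤ ((j+1)/j)(x - √(x²-1))`. -/
theorem legendre_key_inequality (j : ℕ) (hj : 1 ≤ j) (x : ℝ) (hx : 1 < x) :
    (j : ℝ) * legendreP (j - 1) x ≤ ((j : ℝ) + 1) * (x - Real.sqrt (x ^ 2 - 1)) * legendreP j x
    ∧ (0 < legendreP j x ∧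
        legendreP (j - 1) x / legendreP j x
          ≤ ((j : ℝ) + 1) / (j : ℝ) * (x - Real.sqrt (x ^ 2 - 1))) := by
  have hpos : 0 < legendreP j x := legendreP_pos hx.le j
  have hkey := mul_legendreP_pred_le hx.le (two_mul_mul_sub_sqrt_sq_sub_one (one_le_pow₀ hx.le)) j
  refine ⟨hkey, hpos, ?_⟩
  have hj_pos : (0 : ℝ) < j := by exact_mod_cast hj
  rw [div_mul_eq_mul_div, div_le_div_iff₀ hpos hj_pos, mul_comm]
  exact hkey
end

section
/- Let p ≥ 2. For i = 1, 2, let μ₁⁽ⁱ⁾ ∈ ℝ^p and βⁱ ∈ ℝ be such that (1 + (β¹)²)·(μ₁⁽¹⁾)ᵀμ₁⁽¹⁾ = (1 + (β²)²)·(μ₁⁽²⁾)ᵀμ₁⁽²⁾. Let Xⁱ ∼ N(μ₁⁽ⁱ⁾, I_p) and Yⁱ ∼ N(βⁱμ₁⁽ⁱ⁾, I_p) be independent, and let λ₂(Sⁱ) be the smallest eigenvalue of Sⁱ = (Xⁱ Yⁱ)ᵀ(Xⁱ Yⁱ). Then λ₂(S¹) and λ₂(S²) have the same distribution; that is, the distribution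 of the smallest eigenvalue depends on (β, μ₁) only through the noncentrality parameter κ = (1 + β²)·μ₁ᵀμ₁. -/
open MeasureTheory ProbabilityTheory Matrix

/-- The `p × 2` matrix whose columns are `X` and `Y`. -/
noncomputable def colMatrix (p : ℕ) (X Y : Fin p → ℝ) : Matrix (Fin p) (Fin 2) ℝ :=
  Matrix.of fun i j => ![X i, Y i] j

/-!
The mean of `(X Y)` is the rank-one matrix `m bᵀ` with `m = μ₁` and `b = (1, β)`, and its noise has
i.i.d. standard Gaussian entries. Replacing a matrix `Z` by `Q Z Uᵀ`, with `Q` and `U` orthogonal,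
preserves both the law of the noise and the characteristic polynomial of `Zᵀ Z`, hence the law of
the smallest eigenvalue. On means the action is `m bᵀ ↦ (Q m) (U b)ᵀ`, so two rank-one means lie in
the same orbit as soon as they agree in `‖b‖ ‖m‖`, whose square is `κ`.
-/

section GramMatrix

variable {ι κ E : Type*} [NormedAddCommGroup E] [InnerProductSpace ℝ E]

theorem gram_linearIsometry_comp {F : Type*} [NormedAddCommGroup F] [InnerProductSpace ℝ F]
    (Q : E →ₗᵢ[ℝ] F) (v : ι → E) :
    gram ℝ (fun i => Q (v i)) = gram ℝ v := by
  ext i j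
  simp

variable [Fintype ι]

theorem gram_sum_smul (A : Matrix κ ι ℝ) (v : ι → E) :
    gram ℝ (fun i => ∑ j, A i j • v j) = A * gram ℝ v * Aᵀ := by
  ext i j
  simp only [gram_apply, sum_inner, inner_sum, real_inner_smul_left, real_inner_smul_right,
    mul_apply, transpose_apply, Finset.sum_mul]
  exact Finset.sum_congr rfl fun k _ => Finset.sum_congr rfl fun l _ => by
    rw [real_inner_comm]; ring

theorem norm_sq_eq_trace_gram (z : PiLp 2 fun _ : ι => E) : ‖z‖ ^ 2 = (gram ℝ z).trace := by
  simp [PiLp.norm_sq_eq_of_L2, Matrix.trace]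

variable [DecidableEq ι]

theorem charpoly_orthogonal_conj (U : orthogonalGroup ι ℝ) (A : Matrix ι ι ℝ) :
    (U.1 * A * U.1ᵀ).charpoly = A.charpoly := by
  rw [charpoly_mul_comm, ← mul_assoc, (mem_orthogonalGroup_iff' ι ℝ).1 U.2, one_mul]

/-- The smallest eigenvalue of the Gram matrix of a finite family of vectors: the paper's `λ₂(S)`,
for any number of columns. It is `0` on the empty family, where the infimum is over no index. -/
noncomputable def leastGramEigenvalue (v : ι → E) : ℝ :=
  ⨅ i, (isHermitian_gram ℝ v).eigenvalues i

theorem leastGramEigenvalue_eq_of_charpoly_eq {v w : ι → E}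
    (h : (gram ℝ v).charpoly = (gram ℝ w).charpoly) :
    leastGramEigenvalue v = leastGramEigenvalue w := by
  rw [leastGramEigenvalue, leastGramEigenvalue,
    ((isHermitian_gram ℝ v).eigenvalues_eq_eigenvalues_iff (isHermitian_gram ℝ w)).2 h]

open scoped MatrixOrder in
theorem le_leastGramEigenvalue_iff [Nonempty ι] {c : ℝ} {v : ι → E} :
    c ≤ leastGramEigenvalue v ↔ ∀ x : ι → ℝ, c * (x ⬝ᵥ x) ≤ ‖∑ i, x i • v i‖ ^ 2 := by
  have hG := isHermitian_gram ℝ v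
  have hGc : (gram ℝ v - algebraMap ℝ _ c).IsHermitian :=
    hG.sub (by simp [algebraMap_eq_diagonal])
  have hquad (x : ι → ℝ) : x ⬝ᵥ (gram ℝ v - algebraMap ℝ _ c) *ᵥ x =
      ‖∑ i, x i • v i‖ ^ 2 - c * (x ⬝ᵥ x) := by
    rw [sub_mulVec, dotProduct_sub, ← real_inner_self_eq_norm_sq, ← star_dotProduct_gram_mulVec,
      star_trivial, Algebra.algebraMap_eq_smul_one, smul_mulVec, one_mulVec, dotProduct_smul,
      smul_eq_mul]
  calc c ≤ leastGramEigenvalue v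
      ↔ algebraMap ℝ _ c ≤ gram ℝ v := by
        rw [algebraMap_le_iff_le_spectrum hG, hG.spectrum_real_eq_range_eigenvalues,
          Set.forall_mem_range, leastGramEigenvalue, le_ciInf_iff (Set.finite_range _).bddBelow]
    _ ↔ ∀ x : ι → ℝ, 0 ≤ x ⬝ᵥ (gram ℝ v - algebraMap ℝ _ c) *ᵥ x := by
        simp only [le_iff, posSemidef_iff_dotProduct_mulVec, hGc, true_and, star_trivial]
    _ ↔ ∀ x : ι → ℝ, c * (x ⬝ᵥ x) ≤ ‖∑ i, x i • v i‖ ^ 2 := by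
        simp only [hquad, sub_nonneg]

theorem measurable_leastGramEigenvalue [MeasurableSpace E] [BorelSpace E]
    [SecondCountableTopology E] : Measurable (leastGramEigenvalue : (ι → E) → ℝ) := by
  cases isEmpty_or_nonempty ι
  · exact Subsingleton.measurable
  · refine measurable_of_Ici fun c => IsClosed.measurableSet ?_
    simp only [Set.preimage, Set.mem_Ici, le_leastGramEigenvalue_iff, Set.ofPred_forall]
    exact isClosed_iInter fun x => isClosed_le continuous_const (by fun_prop)

end GramMatrix

section OrthogonalAction

variable {ι E : Type*} [Fintype ι] [DecidableEq ι] [NormedAddCommGroup E] [InnerProductSpace ℝ E]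

theorem charpoly_gram_sum_smul_linearIsometry (U : orthogonalGroup ι ℝ) (Q : E →ₗᵢ[ℝ] E)
    (v : ι → E) :
    (gram ℝ fun i => ∑ j, U.1 i j • Q (v j)).charpoly = (gram ℝ v).charpoly := by
  rw [gram_sum_smul, charpoly_orthogonal_conj, gram_linearIsometry_comp]

/-- The linear isometry of `E ^ ι` applying `Q` to each vector and mixing the results by `U`. For
`E = ℝ^p`, viewing a tuple as the `p × ι` matrix `Z` of its columns, it is `Z ↦ Q Z Uᵀ`. -/
noncomputable def orthogonalAction (U : orthogonalGroup ι ℝ) (Q : E →ₗᵢ[ℝ] E) :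
    (PiLp 2 fun _ : ι => E) →ₗᵢ[ℝ] PiLp 2 fun _ : ι => E where
  toFun z := WithLp.toLp 2 fun i => ∑ j, U.1 i j • Q (z j)
  map_add' z w := by ext i; simp [Finset.sum_add_distrib]
  map_smul' c z := by ext i; simp [Finset.smul_sum, smul_comm c]
  norm_map' z := by
    -- `‖z‖ ^ 2` is the trace of the Gram matrix, hence a coefficient of its `charpoly`.
    rw [← sq_eq_sq₀ (norm_nonneg _) (norm_nonneg _), norm_sq_eq_trace_gram, norm_sq_eq_trace_gram,
      trace_eq_neg_charpoly_nextCoeff, trace_eq_neg_charpoly_nextCoeff]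
    exact congrArg (- ·.nextCoeff) (charpoly_gram_sum_smul_linearIsometry U Q z)

theorem leastGramEigenvalue_orthogonalAction (U : orthogonalGroup ι ℝ) (Q : E →ₗᵢ[ℝ] E)
    (z : PiLp 2 fun _ : ι => E) :
    leastGramEigenvalue (orthogonalAction U Q z) = leastGramEigenvalue z :=
  leastGramEigenvalue_eq_of_charpoly_eq (charpoly_gram_sum_smul_linearIsometry U Q z)

end OrthogonalAction

section RankOne

variable {ι E : Type*} [NormedAddCommGroup E] [InnerProductSpace ℝ E]

/-- The tuple of multiples `b i • m` of a single vector, i.e. the rank-one matrix `m bᵀ` by columns.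
The mean of `(X Y)` in the theorem has this form, with `b = (1, β)` and `m = μ₁`. -/
noncomputable def rankOneTuple (b : EuclideanSpace ℝ ι) (m : E) : PiLp 2 fun _ : ι => E :=
  WithLp.toLp 2 fun i => b i • m

theorem rankOneTuple_smul_smul (r s : ℝ) (b : EuclideanSpace ℝ ι) (m : E) :
    rankOneTuple (r • b) (s • m) = (r * s) • rankOneTuple b m := by
  ext i
  simp [rankOneTuple, smul_smul, mul_right_comm]

variable [Fintype ι]

theorem norm_rankOneTuple (b : EuclideanSpace ℝ ι) (m : E) : ‖rankOneTuple b m‖ = ‖b‖ * ‖m‖ := by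
  rw [← sq_eq_sq₀ (by positivity) (by positivity), mul_pow, PiLp.norm_sq_eq_of_L2,
    EuclideanSpace.norm_sq_eq, Finset.sum_mul]
  simp [rankOneTuple, norm_smul, mul_pow]

theorem exists_linearIsometryEquiv_apply_eq {v w : E} (h : ‖v‖ = ‖w‖) :
    ∃ Q : E ≃ₗᵢ[ℝ] E, Q v = w :=
  ⟨Submodule.reflection (ℝ ∙ (v - w))ᗮ, Submodule.reflection_sub h⟩

variable [DecidableEq ι]

theorem orthogonalAction_rankOneTuple (U : orthogonalGroup ι ℝ) (Q : E →ₗᵢ[ℝ] E)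
    (b : EuclideanSpace ℝ ι) (m : E) :
    orthogonalAction U Q (rankOneTuple b m) = rankOneTuple (toEuclideanLin U.1 b) (Q m) := by
  ext i
  simp [orthogonalAction, rankOneTuple, mulVec, dotProduct, Finset.sum_smul, smul_smul]

theorem exists_orthogonalGroup_toEuclideanLin_eq {b c : EuclideanSpace ℝ ι} (h : ‖b‖ = ‖c‖) :
    ∃ U : orthogonalGroup ι ℝ, toEuclideanLin U.1 b = c := by
  obtain ⟨R, hR⟩ := exists_linearIsometryEquiv_apply_eq h
  let e := EuclideanSpace.basisFun ι ℝ
  refine ⟨⟨R.toMatrix e.toBasis e.toBasis, R.toMatrix_mem_unitaryGroup e e⟩, ?_⟩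
  rw [toEuclideanLin_eq_toLin_orthonormal, toLin_toMatrix]
  exact hR

theorem exists_orthogonalAction_rankOneTuple_eq {b₁ b₂ : EuclideanSpace ℝ ι} {m₁ m₂ : E}
    (h : ‖b₁‖ * ‖m₁‖ = ‖b₂‖ * ‖m₂‖) :
    ∃ (U : orthogonalGroup ι ℝ) (Q : E →ₗᵢ[ℝ] E),
      orthogonalAction U Q (rankOneTuple b₁ m₁) = rankOneTuple b₂ m₂ := by
  -- Matching the scaled vectors first avoids dividing by norms, which may vanish.
  obtain ⟨U, hU⟩ : ∃ U : orthogonalGroup ι ℝ,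
      toEuclideanLin U.1 (‖b₂‖ • b₁) = ‖b₁‖ • b₂ :=
    exists_orthogonalGroup_toEuclideanLin_eq (by simp [norm_smul, mul_comm])
  obtain ⟨Q, hQ⟩ : ∃ Q : E ≃ₗᵢ[ℝ] E, Q (‖b₁‖ • m₁) = ‖b₂‖ • m₂ :=
    exists_linearIsometryEquiv_apply_eq (by simpa [norm_smul] using h)
  refine ⟨U, Q.toLinearIsometry, ?_⟩
  by_cases hb : ‖b₁‖ * ‖b₂‖ = 0
  · have hκ : ‖b₁‖ * ‖m₁‖ = 0 := by
      rcases mul_eq_zero.1 hb with hb₁ | hb₂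
      · rw [hb₁, zero_mul]
      · rw [h, hb₂, zero_mul]
    have h₁ : rankOneTuple b₁ m₁ = 0 := by rw [← norm_eq_zero, norm_rankOneTuple, hκ]
    have h₂ : rankOneTuple b₂ m₂ = 0 := by rw [← norm_eq_zero, norm_rankOneTuple, ← h, hκ]
    rw [h₁, h₂, map_zero]
  · have hscaled : (‖b₁‖ * ‖b₂‖) • orthogonalAction U Q.toLinearIsometry (rankOneTuple b₁ m₁) =
        (‖b₁‖ * ‖b₂‖) • rankOneTuple b₂ m₂ := by
      rw [← map_smul, mul_comm, ← rankOneTuple_smul_smul, orthogonalAction_rankOneTuple, hU,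
        LinearIsometryEquiv.coe_toLinearIsometry, hQ, rankOneTuple_smul_smul, mul_comm]
    exact smul_right_injective _ hb hscaled

end RankOne

section StdGaussian

theorem map_comp_linearIsometry_add_stdGaussian {E α : Type*} [NormedAddCommGroup E]
    [InnerProductSpace ℝ E] [FiniteDimensional ℝ E] [MeasurableSpace E] [BorelSpace E]
    [MeasurableSpace α] {f : E → α} (hf : Measurable f) (L : E →ₗᵢ[ℝ] E)
    (hfL : ∀ z, f (L z) = f z) (a : E) :
    (stdGaussian E).map (fun z => f (L a + z)) = (stdGaussian E).map (fun z => f (a + z)) := by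
  have hL : (stdGaussian E).map L = stdGaussian E := stdGaussian_map (L.toLinearIsometryEquiv rfl)
  rw [← hL, Measure.map_map (by fun_prop) (by fun_prop), hL]
  simp only [Function.comp_def, ← map_add, hfL]

variable {ι : Type*} [Fintype ι]

theorem map_toLp_pi_stdGaussian {E : ι → Type*} [∀ i, NormedAddCommGroup (E i)]
    [∀ i, InnerProductSpace ℝ (E i)] [∀ i, FiniteDimensional ℝ (E i)]
    [∀ i, MeasurableSpace (E i)] [∀ i, BorelSpace (E i)] :
    (Measure.pi fun i => stdGaussian (E i)).map (WithLp.toLp 2) = stdGaussian (PiLp 2 E) := by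
  apply Measure.ext_of_charFun
  ext t
  simp_rw [charFun_pi, charFun_stdGaussian, ← Complex.exp_sum, ← Complex.ofReal_pow,
    PiLp.norm_sq_eq_of_L2]
  simp [Finset.sum_div, neg_div]

theorem pi_map_const_add_stdGaussian {E : ι → Type*} [∀ i, NormedAddCommGroup (E i)]
    [∀ i, InnerProductSpace ℝ (E i)] [∀ i, FiniteDimensional ℝ (E i)]
    [∀ i, MeasurableSpace (E i)] [∀ i, BorelSpace (E i)] (a : PiLp 2 E) :
    Measure.pi (fun i => (stdGaussian (E i)).map (a i + ·)) =
      (stdGaussian (PiLp 2 E)).map fun z => WithLp.ofLp (a + z) := by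
  have (i : ι) : IsProbabilityMeasure ((stdGaussian (E i)).map (a i + ·)) :=
    Measure.isProbabilityMeasure_map (by fun_prop)
  rw [← map_toLp_pi_stdGaussian, Measure.map_map (by fun_prop) (by fun_prop),
    ← Measure.pi_map_pi fun i => by fun_prop]
  rfl

theorem map_toLp_mvGaussianId (p : ℕ) (μ : Fin p → ℝ) :
    (mvGaussianId p μ).map (WithLp.toLp 2) =
      (stdGaussian (EuclideanSpace ℝ (Fin p))).map (WithLp.toLp 2 μ + ·) := by
  have hμ (i : Fin p) : gaussianReal (μ i) 1 = (gaussianReal 0 1).map (μ i + ·) := by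
    rw [gaussianReal_map_const_add, zero_add]
  simp_rw [mvGaussianId, hμ]
  rw [← Measure.pi_map_pi fun i => by fun_prop, ← map_pi_eq_stdGaussian,
    Measure.map_map (by fun_prop) (by fun_prop), Measure.map_map (by fun_prop) (by fun_prop)]
  rfl

end StdGaussian

section RandomTuples

theorem hasLaw_vecCons_of_indepFun {Ω α : Type*} [MeasurableSpace Ω] [MeasurableSpace α]
    {P : Measure Ω} {μ ν : Measure α} [IsProbabilityMeasure P] {X Y : Ω → α}
    (hX : HasLaw X μ P) (hY : HasLaw Y ν P) (h : IndepFun X Y P) :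
    HasLaw (fun ω => ![X ω, Y ω]) (Measure.pi ![μ, ν]) P := by
  have := hX.isProbabilityMeasure_iff.1 ‹_›
  have := hY.isProbabilityMeasure_iff.1 ‹_›
  exact (measurePreserving_finTwoArrow_vec μ ν).symm.hasLaw.comp (h.hasLaw_prod hX hY)

theorem transpose_mul_colMatrix (p : ℕ) (x y : Fin p → ℝ) :
    (colMatrix p x y)ᵀ * colMatrix p x y =
      gram ℝ ![(WithLp.toLp 2 x : EuclideanSpace ℝ (Fin p)), WithLp.toLp 2 y] := by
  ext i j
  fin_cases i <;> fin_cases j <;>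
    simp [colMatrix, mul_apply, EuclideanSpace.inner_toLp_toLp, EuclideanSpace.real_norm_sq_eq,
      dotProduct, mul_comm, ← sq]

theorem iInf_eigenvalues_colMatrix {p : ℕ} {x y : Fin p → ℝ}
    (h : ((colMatrix p x y)ᵀ * colMatrix p x y).IsHermitian) :
    ⨅ j, h.eigenvalues j = leastGramEigenvalue
      ![(WithLp.toLp 2 x : EuclideanSpace ℝ (Fin p)), WithLp.toLp 2 y] := by
  simp only [leastGramEigenvalue, transpose_mul_colMatrix]

theorem hasLaw_columns {Ω : Type*} [MeasurableSpace Ω] {P : Measure Ω} [IsProbabilityMeasure P]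
    {p : ℕ} {μ : Fin p → ℝ} {β : ℝ} {X Y : Ω → Fin p → ℝ}
    (hX : HasLaw X (mvGaussianId p μ) P)
    (hY : HasLaw Y (mvGaussianId p fun i => β * μ i) P) (hXY : IndepFun X Y P) :
    HasLaw (fun ω => ![WithLp.toLp 2 (X ω), WithLp.toLp 2 (Y ω)])
      (Measure.pi fun j => (stdGaussian (EuclideanSpace ℝ (Fin p))).map
        (!₂[1, β] j • WithLp.toLp 2 μ + ·)) P := by
  have htoLp (ν : Fin p → ℝ) : HasLaw (WithLp.toLp 2)
      ((stdGaussian (EuclideanSpace ℝ (Fin p))).map (WithLp.toLp 2 ν + ·)) (mvGaussianId p ν) :=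
    ⟨by fun_prop, map_toLp_mvGaussianId p ν⟩
  have hlaws : (fun j => (stdGaussian (EuclideanSpace ℝ (Fin p))).map
        (!₂[1, β] j • WithLp.toLp 2 μ + ·)) =
      ![(stdGaussian (EuclideanSpace ℝ (Fin p))).map (WithLp.toLp 2 μ + ·),
        (stdGaussian (EuclideanSpace ℝ (Fin p))).map (WithLp.toLp 2 (β • μ) + ·)] := by
    funext j
    fin_cases j <;> simp
  rw [hlaws]
  exact hasLaw_vecCons_of_indepFun ((htoLp _).comp hX) ((htoLp _).comp hY)
    (hXY.comp (by fun_prop) (by fun_prop))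

theorem norm_mul_norm_eq_of_kappa_eq {p : ℕ} {μ₁ μ₂ : Fin p → ℝ} {β₁ β₂ : ℝ}
    (hκ : (1 + β₁ ^ 2) * ∑ i, (μ₁ i) ^ 2 = (1 + β₂ ^ 2) * ∑ i, (μ₂ i) ^ 2) :
    ‖!₂[1, β₁]‖ * ‖WithLp.toLp 2 μ₁‖ = ‖!₂[1, β₂]‖ * ‖WithLp.toLp 2 μ₂‖ := by
  rw [← sq_eq_sq₀ (by positivity) (by positivity), mul_pow, mul_pow]
  simpa [EuclideanSpace.real_norm_sq_eq] using hκ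

theorem map_leastGramEigenvalue_of_hasLaw {Ω ι E : Type*} [MeasurableSpace Ω] {P : Measure Ω}
    [Fintype ι] [DecidableEq ι] [NormedAddCommGroup E] [InnerProductSpace ℝ E]
    [FiniteDimensional ℝ E] [MeasurableSpace E] [BorelSpace E]
    {Z : Ω → ι → E} {a : PiLp 2 fun _ : ι => E}
    (hZ : HasLaw Z (Measure.pi fun i => (stdGaussian E).map (a i + ·)) P) :
    P.map (fun ω => leastGramEigenvalue (Z ω)) =
      (stdGaussian (PiLp 2 fun _ : ι => E)).map
        fun z => leastGramEigenvalue (a + z : PiLp 2 fun _ : ι => E) := by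
  have hmeas : Measurable (leastGramEigenvalue : (ι → E) → ℝ) := measurable_leastGramEigenvalue
  rw [pi_map_const_add_stdGaussian] at hZ
  rw [← Function.comp_def leastGramEigenvalue,
    ← AEMeasurable.map_map_of_aemeasurable hmeas.aemeasurable hZ.aemeasurable,
    hZ.map_eq, Measure.map_map hmeas (by fun_prop)]
  rfl

end RandomTuples

theorem smallest_eigenvalue_distribution_depends_only_on_kappa_general
    {Ω₁ Ω₂ ι E : Type*} [MeasurableSpace Ω₁] [MeasurableSpace Ω₂] {P₁ : Measure Ω₁}
    {P₂ : Measure Ω₂} [Fintype ι] [DecidableEq ι] [NormedAddCommGroup E] [InnerProductSpace ℝ E]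
    [FiniteDimensional ℝ E] [MeasurableSpace E] [BorelSpace E]
    {b₁ b₂ : EuclideanSpace ℝ ι} {m₁ m₂ : E} (hκ : ‖b₁‖ * ‖m₁‖ = ‖b₂‖ * ‖m₂‖)
    {Z₁ : Ω₁ → ι → E} {Z₂ : Ω₂ → ι → E}
    (hZ₁ : HasLaw Z₁ (Measure.pi fun i => (stdGaussian E).map (b₁ i • m₁ + ·)) P₁)
    (hZ₂ : HasLaw Z₂ (Measure.pi fun i => (stdGaussian E).map (b₂ i • m₂ + ·)) P₂) :
    P₁.map (fun ω => leastGramEigenvalue (Z₁ ω)) =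
      P₂.map (fun ω => leastGramEigenvalue (Z₂ ω)) := by
  obtain ⟨U, Q, hUQ⟩ := exists_orthogonalAction_rankOneTuple_eq hκ
  rw [map_leastGramEigenvalue_of_hasLaw (a := rankOneTuple b₁ m₁) hZ₁,
    map_leastGramEigenvalue_of_hasLaw (a := rankOneTuple b₂ m₂) hZ₂, ← hUQ]
  exact (map_comp_linearIsometry_add_stdGaussian
    (measurable_leastGramEigenvalue.comp (by fun_prop)) (orthogonalAction U Q)
    (leastGramEigenvalue_orthogonalAction U Q) _).symm

/-- The distribution of the smallest eigenvalue of `S = (X Y)ᵀ (X Y)`, where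
`X ∼ N(μ₁, I_p)` and `Y ∼ N(βμ₁, I_p)` are independent, depends on `(β, μ₁)` only through
the noncentrality parameter `κ = (1 + β²) μ₁ᵀ μ₁`. -/
theorem smallest_eigenvalue_distribution_depends_only_on_kappa
    {Ω₁ : Type*} [MeasureSpace Ω₁] [IsProbabilityMeasure (ℙ : Measure Ω₁)]
    {Ω₂ : Type*} [MeasureSpace Ω₂] [IsProbabilityMeasure (ℙ : Measure Ω₂)]
    (p : ℕ) (hp : 2 ≤ p) (μ₁ μ₂ : Fin p → ℝ) (β₁ β₂ : ℝ)
    (hκ : (1 + β₁ ^ 2) * ∑ i, (μ₁ i) ^ 2 = (1 + β₂ ^ 2) * ∑ i, (μ₂ i) ^ 2)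
    (X₁ Y₁ : Ω₁ → Fin p → ℝ) (hX₁ : Measurable X₁) (hY₁ : Measurable Y₁)
    (hX₁law : Measure.map X₁ ℙ = mvGaussianId p μ₁)
    (hY₁law : Measure.map Y₁ ℙ = mvGaussianId p (fun i => β₁ * μ₁ i))
    (hindep₁ : IndepFun X₁ Y₁ ℙ)
    (X₂ Y₂ : Ω₂ → Fin p → ℝ) (hX₂ : Measurable X₂) (hY₂ : Measurable Y₂)
    (hX₂law : Measure.map X₂ ℙ = mvGaussianId p μ₂)
    (hY₂law : Measure.map Y₂ ℙ = mvGaussianId p (fun i => β₂ * μ₂ i))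
    (hindep₂ : IndepFun X₂ Y₂ ℙ)
    (hS₁ : ∀ ω, ((colMatrix p (X₁ ω) (Y₁ ω))ᵀ * colMatrix p (X₁ ω) (Y₁ ω)).IsHermitian)
    (hS₂ : ∀ ω, ((colMatrix p (X₂ ω) (Y₂ ω))ᵀ * colMatrix p (X₂ ω) (Y₂ ω)).IsHermitian) :
    Measure.map (fun ω => ⨅ j, (hS₁ ω).eigenvalues j) (ℙ : Measure Ω₁)
      = Measure.map (fun ω => ⨅ j, (hS₂ ω).eigenvalues j) (ℙ : Measure Ω₂) := by
  simp only [iInf_eigenvalues_colMatrix]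
  exact smallest_eigenvalue_distribution_depends_only_on_kappa_general
    (norm_mul_norm_eq_of_kappa_eq hκ)
    (hasLaw_columns ⟨hX₁.aemeasurable, hX₁law⟩ ⟨hY₁.aemeasurable, hY₁law⟩ hindep₁)
    (hasLaw_columns ⟨hX₂.aemeasurable, hX₂law⟩ ⟨hY₂.aemeasurable, hY₂law⟩ hindep₂)
end
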